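/- For every even integer t with 2 ≤ t ≤ 12 there exists a linear code over the field with 32 elements of length 42, dimension 2t, minimum distance at least 42 − (3t + 2) = 40 − 3t, and locality 2. In particular (t = 10), there exists a linear code over the field with 32 elements of length 42, dimension 20, minimum distance at least 10, and locality 2. -/

import Mathlib

/-!
A 3-isogeny `E → E'` of elliptic curves over `𝔽₃₂` partitions the 42 rational points of `E` into
14 fibres of three points. Words are the functions `f₀ + f₁ x` on these points, where `f₀` and `f₁`
are pulled back from `E'` and `x` is a coordinate of degree two that separates each fibre. On a
fibre such a word is affine in `x`, so two of its values determine the third. In the quartic models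
used here the two points at infinity are conjugate over a quadratic extension, so no rational point
is lost to poles. If `f₀, f₁` have poles of order at most `n` at infinity, then after clearing a
denominator that vanishes at no rational point the word has poles of order at most `3n + 1` there,
hence at most `2(3n + 1)` zeros. Zeros are counted by the degree of the norm from the coordinate
ring `F[x] ⊕ F[x] y` down to `F[x]`.
-/

open Polynomial QuadraticAlgebra

/-! ### Locally recoverable codes -/

section LocallyRecoverable

variable {F ι : Type*} [Field F]

/-- `C` is a locally recoverable code of dimension `k`, minimum distance at least `d` and
locality `r`. Coordinates are indexed by an arbitrary type `ι`, so that fibred index sets can be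
used directly. -/
structure IsLRC (C : Submodule F (ι → F)) (k d r : ℕ) : Prop where
  finrank_eq : Module.finrank F C = k
  le_card_support : ∀ x ∈ C, x ≠ 0 → d ≤ Nat.card {i // x i ≠ 0}
  locality : ∀ i, ∃ I : Finset ι, i ∉ I ∧ I.card ≤ r ∧
    ∀ x ∈ C, ∀ y ∈ C, (∀ j ∈ I, x j = y j) → x i = y i

theorem IsLRC.exists_of_equiv {F' ι' : Type*} [Field F'] {C : Submodule F (ι → F)} {k d r : ℕ}
    (hC : IsLRC C k d r) (e : F ≃+* F') (σ : ι ≃ ι') :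
    ∃ C' : Submodule F' (ι' → F'), IsLRC C' k d r := by
  have := RingHomInvPair.of_ringEquiv e
  have := RingHomInvPair.of_ringEquiv_symm e
  let Ψ : (ι → F) ≃ₛₗ[(e : F →+* F')] (ι' → F') :=
    { toFun x i := e (x (σ.symm i))
      invFun y i := e.symm (y (σ i))
      left_inv x := by simp
      right_inv y := by simp
      map_add' x y := by ext; simp
      map_smul' c x := by ext; simp }
  refine ⟨C.map Ψ.toLinearMap, ?_, ?_, fun i => ?_⟩
  · have hrank := lift_rank_eq_of_equiv_equiv e (Ψ.submoduleMap C).toAddEquiv e.bijective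
      (map_smulₛₗ (Ψ.submoduleMap C))
    rw [← hC.finrank_eq]
    simpa [Module.finrank] using (congrArg Cardinal.toNat hrank).symm
  · rintro _ ⟨x, hx, rfl⟩ hx0
    have hsupp : Nat.card {i // x i ≠ 0} = Nat.card {i // Ψ x i ≠ 0} :=
      Nat.card_congr (σ.subtypeEquiv fun i => by simp [Ψ])
    exact hsupp ▸ hC.le_card_support x hx (by rintro rfl; exact hx0 (map_zero Ψ))
  · obtain ⟨I, hi, hI, hloc⟩ := hC.locality (σ.symm i)
    refine ⟨I.map σ, by simpa using hi, by simpa using hI, ?_⟩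
    rintro _ ⟨x, hx, rfl⟩ _ ⟨y, hy, rfl⟩ hxy
    exact congrArg e (hloc x hx y hy fun j hj => by
      simpa [Ψ] using hxy (σ j) (Finset.mem_map_of_mem _ hj))

variable {κ : Type*} {r : ℕ}

/-- The map sending a tuple `(f₀, …, f_{r-1})` of functions on a base `κ` to the function
`∑ fᵢ xⁱ` on the total space `κ × Fin (r + 1)`, whose fibres are the sets `{k} × Fin (r + 1)`. -/
def fiberwiseEval (x : κ → Fin (r + 1) → F) (V : Submodule F (κ → F)) :
    (Fin r → V) →ₗ[F] κ × Fin (r + 1) → F where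
  toFun f p := ∑ i, (f i : κ → F) p.1 * x p.1 p.2 ^ (i : ℕ)
  map_add' f g := by ext p; simp [add_mul, Finset.sum_add_distrib]
  map_smul' c f := by ext p; simp [mul_assoc, Finset.mul_sum]

variable {x : κ → Fin (r + 1) → F} {V : Submodule F (κ → F)}

lemma fiberwiseEval_apply (f : Fin r → V) (p : κ × Fin (r + 1)) :
    fiberwiseEval x V f p = ∑ i, (f i : κ → F) p.1 * x p.1 p.2 ^ (i : ℕ) := rfl

-- On a fibre the word is a polynomial of degree `< r` in `x`, and `r` values determine it.
lemma eq_zero_of_fiberwiseEval_succAbove_eq_zero {k : κ} (hx : Function.Injective (x k))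
    {f : Fin r → V} (l : Fin (r + 1))
    (hf : ∀ m : Fin r, fiberwiseEval x V f (k, l.succAbove m) = 0) (i : Fin r) :
    (f i : κ → F) k = 0 :=
  congrFun (Matrix.eq_zero_of_forall_index_sum_mul_pow_eq_zero
    (v := fun i => (f i : κ → F) k) (hx.comp Fin.succAbove_right_injective) hf) i

lemma fiberwiseEval_injective (hx : ∀ k, Function.Injective (x k)) :
    Function.Injective (fiberwiseEval x V) := by
  refine (injective_iff_map_eq_zero _).2 fun f hf => ?_
  ext i k
  exact eq_zero_of_fiberwiseEval_succAbove_eq_zero (hx k) 0 (fun m => congrFun hf _) i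

lemma finrank_range_fiberwiseEval [Finite κ] (hx : ∀ k, Function.Injective (x k)) :
    Module.finrank F (LinearMap.range (fiberwiseEval x V)) = r * Module.finrank F V := by
  rw [LinearMap.finrank_range_of_inj (fiberwiseEval_injective hx), Module.finrank_pi_fintype]
  simp

theorem locality_range_fiberwiseEval (hx : ∀ k, Function.Injective (x k))
    (p : κ × Fin (r + 1)) :
    ∃ I : Finset (κ × Fin (r + 1)), p ∉ I ∧ I.card ≤ r ∧
      ∀ v ∈ LinearMap.range (fiberwiseEval x V), ∀ w ∈ LinearMap.range (fiberwiseEval x V),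
        (∀ j ∈ I, v j = w j) → v p = w p := by
  obtain ⟨k, l⟩ := p
  let others : Fin r ↪ κ × Fin (r + 1) :=
    l.succAboveEmb.trans (Function.Embedding.sectR k (Fin (r + 1)))
  refine ⟨Finset.univ.map others, by simp [others], by simp, ?_⟩
  rintro _ ⟨f, rfl⟩ _ ⟨g, rfl⟩ hfg
  have hsub : ∀ m, fiberwiseEval x V (f - g) (k, l.succAbove m) = 0 := fun m => by
    rw [map_sub, Pi.sub_apply, sub_eq_zero]
    exact hfg (others m) (Finset.mem_map_of_mem _ (Finset.mem_univ m))
  have hzero := eq_zero_of_fiberwiseEval_succAbove_eq_zero (hx k) l hsub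
  rw [← sub_eq_zero, ← Pi.sub_apply, ← map_sub, fiberwiseEval_apply]
  exact Finset.sum_eq_zero fun i _ => by rw [hzero i, zero_mul]

end LocallyRecoverable

/-! ### Coordinate rings of double covers of the line -/

section CoordinateRing

variable {F : Type*} [Field F] {a b : F[X]} {d : ℕ}

/-- The affine curve `y² = a(x) + b(x) y`, whose coordinate ring is `QuadraticAlgebra F[X] a b`, has
exactly two points at infinity, and these are conjugate over a quadratic extension of `F`. For
`d = 2` this is the quartic model of a curve of genus at most one. -/
structure IsInertAtInfty (a b : F[X]) (d : ℕ) : Prop where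
  natDegree_left_le : a.natDegree ≤ 2 * d
  natDegree_right_le : b.natDegree ≤ d
  sq_ne : ∀ s : F, s ^ 2 ≠ a.coeff (2 * d) + b.coeff d * s

/-- The functions on `y² = a(x) + b(x) y` whose poles at infinity have order at most `m`, where `x`
has poles of order one and `y` has poles of order at most `d`: the Riemann–Roch space of `m` times
the divisor at infinity. The degree bound `m + 1 - d` on the coefficient of `y` is a truncated
subtraction, which forces that coefficient to vanish for `m < d`. -/
noncomputable def poleSpace (a b : F[X]) (d m : ℕ) : Submodule F (QuadraticAlgebra F[X] a b) :=
  (degreeLT F (m + 1)).comap ((reₗ a b).restrictScalars F) ⊓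
    (degreeLT F (m + 1 - d)).comap ((imₗ a b).restrictScalars F)

lemma mem_poleSpace {m : ℕ} {z : QuadraticAlgebra F[X] a b} :
    z ∈ poleSpace a b d m ↔ z.re.degree ≤ m ∧ z.im.degree + d ≤ m := by
  have hre : z.re.degree < (m + 1 : ℕ) ↔ z.re.degree ≤ m := by
    rw [← mem_degreeLT, degreeLT_succ_eq_degreeLE, mem_degreeLE]
  have him : z.im.degree < (m + 1 - d : ℕ) ↔ z.im.degree + d ≤ m := by
    cases z.im.degree with
    | bot => simp
    | coe n =>
      rw [← Nat.cast_withBot]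
      exact_mod_cast (by omega : n < m + 1 - d ↔ n + d ≤ m)
  rw [← hre, ← him, ← mem_degreeLT, ← mem_degreeLT]
  rfl

lemma mem_poleSpace_of_natDegree_le {m n : ℕ} {p q : F[X]} (hp : p.natDegree ≤ m)
    (hq : q.natDegree ≤ n) (hn : n + d ≤ m) :
    (⟨p, q⟩ : QuadraticAlgebra F[X] a b) ∈ poleSpace a b d m := by
  refine mem_poleSpace.2 ⟨degree_le_of_natDegree_le hp, ?_⟩
  grw [degree_le_of_natDegree_le hq]
  exact_mod_cast hn

/-- A function in `poleSpace a b d m` amounts to a pair of polynomials of bounded degree; this gives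
the dimension of the space. -/
noncomputable def poleSpaceEquiv (a b : F[X]) (d m : ℕ) :
    poleSpace a b d m ≃ₗ[F] degreeLT F (m + 1) × degreeLT F (m + 1 - d) where
  toFun z := (⟨z.1.re, z.2.1⟩, ⟨z.1.im, z.2.2⟩)
  invFun p := ⟨⟨p.1, p.2⟩, p.1.2, p.2.2⟩
  map_add' _ _ := rfl
  map_smul' _ _ := rfl

lemma finrank_poleSpace (a b : F[X]) {d m : ℕ} (hd : d ≤ m + 1) :
    Module.finrank F (poleSpace a b d m) = 2 * m + 2 - d := by
  have finrank_degreeLT (n : ℕ) : Module.finrank F (degreeLT F n) = n := by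
    rw [(degreeLTEquiv F n).finrank_eq, Module.finrank_fin_fun]
  have finite_degreeLT (n : ℕ) : Module.Finite F (degreeLT F n) :=
    Module.Finite.equiv (degreeLTEquiv F n).symm
  rw [(poleSpaceEquiv a b d m).finrank_eq, Module.finrank_prod, finrank_degreeLT,
    finrank_degreeLT]
  omega

lemma algebraMap_mem_poleSpace {p : F[X]} {m : ℕ} (hp : p.degree ≤ m) :
    algebraMap F[X] (QuadraticAlgebra F[X] a b) p ∈ poleSpace a b d m :=
  mem_poleSpace.2 ⟨hp, by simp⟩

namespace IsInertAtInfty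

variable (h : IsInertAtInfty a b d)
include h

lemma degree_left_le : a.degree ≤ (d + d : WithBot ℕ) := by
  simpa [two_mul] using degree_le_of_natDegree_le h.natDegree_left_le

lemma degree_right_le : b.degree ≤ d := degree_le_of_natDegree_le h.natDegree_right_le

lemma mul_mem_poleSpace {m n : ℕ} {z w : QuadraticAlgebra F[X] a b} (hz : z ∈ poleSpace a b d m)
    (hw : w ∈ poleSpace a b d n) : z * w ∈ poleSpace a b d (m + n) := by
  obtain ⟨hz_re, hz_im⟩ := mem_poleSpace.1 hz
  obtain ⟨hw_re, hw_im⟩ := mem_poleSpace.1 hw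
  have ha := h.degree_left_le
  have hb := h.degree_right_le
  rw [mem_poleSpace, re_mul, im_mul, Nat.cast_add]
  constructor
  · refine (degree_add_le _ _).trans (max_le ?_ ?_)
    · exact (degree_mul_le _ _).trans (add_le_add hz_re hw_re)
    · calc (a * z.im * w.im).degree ≤ (d + d) + z.im.degree + w.im.degree := by
            grw [degree_mul_le, degree_mul_le, ha]
        _ = (z.im.degree + d) + (w.im.degree + d) := by abel
        _ ≤ m + n := add_le_add hz_im hw_im
  · have h1 : (z.re * w.im).degree + d ≤ m + n := by
      grw [degree_mul_le, add_assoc, hz_re, hw_im]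
    have h2 : (z.im * w.re).degree + d ≤ m + n := by
      grw [degree_mul_le, add_right_comm, hz_im, hw_re]
    have h3 : (b * z.im * w.im).degree + d ≤ m + n := by
      calc (b * z.im * w.im).degree + d ≤ d + z.im.degree + w.im.degree + d := by
            grw [degree_mul_le, degree_mul_le, hb]
        _ = (z.im.degree + d) + (w.im.degree + d) := by abel
        _ ≤ m + n := add_le_add hz_im hw_im
    rw [← degree_mul_X_pow] at h1 h2 h3 ⊢
    rw [add_mul, add_mul]
    exact (degree_add_le _ _).trans (max_le ((degree_add_le _ _).trans (max_le h1 h2)) h3)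

lemma pow_mem_poleSpace {m : ℕ} {z : QuadraticAlgebra F[X] a b} (hz : z ∈ poleSpace a b d m)
    (n : ℕ) : z ^ n ∈ poleSpace a b d (m * n) := by
  induction n with
  | zero => simpa using algebraMap_mem_poleSpace (a := a) (b := b) (m := 0) degree_one_le
  | succ n ih => exact pow_succ z n ▸ h.mul_mem_poleSpace ih hz

lemma star_mem_poleSpace {m : ℕ} {z : QuadraticAlgebra F[X] a b} (hz : z ∈ poleSpace a b d m) :
    star z ∈ poleSpace a b d m := by
  obtain ⟨hre, him⟩ := mem_poleSpace.1 hz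
  have hb : (b * z.im).degree ≤ m := by
    grw [degree_mul_le, h.degree_right_le, add_comm, him]
  exact mem_poleSpace.2 ⟨degree_add_le_of_le hre hb |>.trans_eq (max_self _),
    (degree_neg z.im).symm ▸ him⟩

lemma natDegree_norm_le {m : ℕ} {z : QuadraticAlgebra F[X] a b} (hz : z ∈ poleSpace a b d m) :
    (norm z).natDegree ≤ 2 * m := by
  have hmem := h.mul_mem_poleSpace hz (h.star_mem_poleSpace hz)
  rw [← algebraMap_norm_eq_mul_star, mem_poleSpace] at hmem
  exact (natDegree_le_of_degree_le hmem.1).trans_eq (two_mul m).symm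

lemma coeff_norm {k : ℕ} {z : QuadraticAlgebra F[X] a b} (hre : z.re.natDegree ≤ k + d)
    (him : z.im.natDegree ≤ k) :
    (norm z).coeff (2 * (k + d)) =
      norm (⟨z.re.coeff (k + d), z.im.coeff k⟩ :
        QuadraticAlgebra F (a.coeff (2 * d)) (b.coeff d)) := by
  have hre_re := coeff_mul_add_eq_of_natDegree_le hre hre
  have hre_im := coeff_mul_add_eq_of_natDegree_le
    (natDegree_mul_le_of_le h.natDegree_right_le hre) him
  have him_im := coeff_mul_add_eq_of_natDegree_le
    (natDegree_mul_le_of_le h.natDegree_left_le him) him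
  rw [coeff_mul_add_eq_of_natDegree_le h.natDegree_right_le hre,
    show d + (k + d) + k = 2 * (k + d) by ring] at hre_im
  rw [coeff_mul_add_eq_of_natDegree_le h.natDegree_left_le him,
    show 2 * d + k + k = 2 * (k + d) by ring] at him_im
  rw [← two_mul] at hre_re
  rw [norm_def, coeff_sub, coeff_add, hre_re, hre_im, him_im, norm_def]

lemma norm_ne_zero {z : QuadraticAlgebra F[X] a b} (hz : z ≠ 0) : norm z ≠ 0 := by
  have : Fact (∀ s : F, s ^ 2 ≠ a.coeff (2 * d) + b.coeff d * s) := ⟨h.sq_ne⟩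
  by_cases him : z.im = 0
  · have hre : z.re ≠ 0 := fun hre => hz (QuadraticAlgebra.ext hre him)
    simpa [norm_def, him] using hre
  suffices ∃ k, z.re.natDegree ≤ k + d ∧ z.im.natDegree ≤ k ∧
      (z.re.coeff (k + d) ≠ 0 ∨ z.im.coeff k ≠ 0) by
    obtain ⟨k, hre, him, hk⟩ := this
    intro hnorm
    have := h.coeff_norm hre him
    rw [hnorm, coeff_zero, eq_comm, norm_eq_zero_iff_eq_zero, QuadraticAlgebra.ext_iff] at this
    exact hk.elim (· this.1) (· this.2)
  obtain hle | hlt := le_or_gt z.re.natDegree (z.im.natDegree + d)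
  · exact ⟨_, hle, le_rfl, .inr (leadingCoeff_ne_zero.2 him)⟩
  · refine ⟨z.re.natDegree - d, by omega, by omega, .inl ?_⟩
    rw [Nat.sub_add_cancel (by omega)]
    exact leadingCoeff_ne_zero.2 (ne_zero_of_natDegree_gt hlt)

lemma isDomain : IsDomain (QuadraticAlgebra F[X] a b) := by
  have : NoZeroDivisors (QuadraticAlgebra F[X] a b) :=
    ⟨fun {z w} hzw => by
      by_contra! hne
      refine mul_ne_zero (h.norm_ne_zero hne.1) (h.norm_ne_zero hne.2) ?_
      rw [← map_mul, hzw, QuadraticAlgebra.norm_zero]⟩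
  exact NoZeroDivisors.to_isDomain _

lemma finrank_quotient_span_le {m : ℕ} {z : QuadraticAlgebra F[X] a b} (hz : z ≠ 0)
    (hzm : z ∈ poleSpace a b d m) :
    Module.finrank F (QuadraticAlgebra F[X] a b ⧸ Ideal.span {z}) ≤ 2 * m := by
  have := h.isDomain
  have hdet : LinearMap.det (Algebra.lmul F[X] _ z) = norm z := det_toLinearMap_eq_norm z
  rw [finrank_quotient_span_eq_natDegree_norm (basis a b) hz, Algebra.norm_apply, hdet]
  exact h.natDegree_norm_le hzm

lemma finite_quotient_span {z : QuadraticAlgebra F[X] a b} (hz : z ≠ 0) :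
    Module.Finite F (QuadraticAlgebra F[X] a b ⧸ Ideal.span {z}) := by
  have := h.isDomain
  exact Module.Finite.equiv
    (Ideal.quotientEquivDirectSum F (basis a b) (Ideal.span_singleton_eq_bot.not.2 hz)).symm

end IsInertAtInfty

end CoordinateRing

/-! ### Rational points and evaluation codes -/

section AffinePoint

variable {F : Type*} [Field F] {a b : F[X]}

/-- The rational points of the affine curve `y² = a(x) + b(x) y`. -/
@[ext] structure AffinePoint (a b : F[X]) where
  x : F
  y : F
  equation : y * y = a.eval x + b.eval x * y

namespace AffinePoint

/-- Evaluation at a point, as a character of the coordinate ring `QuadraticAlgebra F[X] a b`. -/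
def eval (P : AffinePoint a b) : QuadraticAlgebra F[X] a b →ₐ[F] F where
  toFun z := z.re.eval P.x + z.im.eval P.x * P.y
  map_one' := by simp
  map_mul' z w := by
    simp only [re_mul, im_mul, eval_add, eval_mul]
    linear_combination -(z.im.eval P.x * w.im.eval P.x) * P.equation
  map_zero' := by simp
  map_add' z w := by simp only [re_add, im_add, eval_add]; ring
  commutes' c := by simp [IsScalarTower.algebraMap_apply F F[X] (QuadraticAlgebra F[X] a b)]

lemma eval_apply (P : AffinePoint a b) (z : QuadraticAlgebra F[X] a b) :
    P.eval z = z.re.eval P.x + z.im.eval P.x * P.y := rfl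

lemma eval_algebraMap (P : AffinePoint a b) (p : F[X]) :
    P.eval (algebraMap F[X] (QuadraticAlgebra F[X] a b) p) = p.eval P.x := by
  simp [eval_apply]

lemma eval_injective : Function.Injective (eval (a := a) (b := b)) := fun P Q hPQ => by
  have hx := DFunLike.congr_fun hPQ ⟨X, 0⟩
  have hy := DFunLike.congr_fun hPQ ⟨0, 1⟩
  simp only [eval_apply, eval_X, eval_zero, eval_one, zero_mul, one_mul, add_zero, zero_add]
    at hx hy
  exact AffinePoint.ext hx hy

end AffinePoint

-- Distinct zeros of `z` are distinct characters of the quotient by `z`, whose dimension is the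
-- degree of the norm of `z`.
theorem IsInertAtInfty.card_zeros_le {d m : ℕ} (h : IsInertAtInfty a b d) {ι : Type*}
    {P : ι → AffinePoint a b} (hP : Function.Injective P) {z : QuadraticAlgebra F[X] a b}
    (hz : z ≠ 0) (hzm : z ∈ poleSpace a b d m) :
    Nat.card {i // (P i).eval z = 0} ≤ 2 * m := by
  have := h.finite_quotient_span hz
  let Φ (i : {i // (P i).eval z = 0}) : (QuadraticAlgebra F[X] a b ⧸ Ideal.span {z}) →ₐ[F] F :=
    Ideal.Quotient.liftₐ _ (P i).eval fun w hw => by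
      obtain ⟨c, rfl⟩ := Ideal.mem_span_singleton.1 hw
      rw [map_mul, i.2, zero_mul]
  have hΦ : Function.Injective Φ := fun i j hij => by
    refine Subtype.ext (hP (AffinePoint.eval_injective ?_))
    simpa [Φ, Ideal.Quotient.liftₐ_comp] using congrArg (AlgHom.comp · (Ideal.Quotient.mkₐ F _)) hij
  calc _ ≤ _ := Nat.card_le_card_of_injective Φ hΦ
    _ ≤ _ := card_algHom_le_finrank _ _ _
    _ ≤ 2 * m := h.finrank_quotient_span_le hz hzm

variable {d m : ℕ} {ι : Type*}

theorem IsInertAtInfty.le_card_eval_ne_zero [Finite ι] (h : IsInertAtInfty a b d)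
    {P : ι → AffinePoint a b} (hP : Function.Injective P) {z : QuadraticAlgebra F[X] a b}
    (hz : z ≠ 0) (hzm : z ∈ poleSpace a b d m) :
    Nat.card ι - 2 * m ≤ Nat.card {i // (P i).eval z ≠ 0} := by
  classical
  have hcard := Nat.card_congr (Equiv.sumCompl fun i => (P i).eval z = 0)
  rw [Nat.card_sum] at hcard
  have := h.card_zeros_le hP hz hzm
  simp only [ne_eq]
  omega

/-- The code obtained by evaluating the functions in `poleSpace a b d m` at the points `P i`. -/
noncomputable def evalCode (P : ι → AffinePoint a b) (d m : ℕ) : Submodule F (ι → F) :=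
  LinearMap.range ((LinearMap.pi fun i => (P i).eval.toLinearMap).domRestrict (poleSpace a b d m))

lemma finrank_evalCode (h : IsInertAtInfty a b d) {P : ι → AffinePoint a b}
    (hP : Function.Injective P) (hd : d ≤ m + 1) (hm : 2 * m < Nat.card ι) :
    Module.finrank F (evalCode P d m) = 2 * m + 2 - d := by
  rw [← finrank_poleSpace a b hd]
  refine LinearMap.finrank_range_of_inj ((injective_iff_map_eq_zero _).2 fun z hz => ?_)
  have hzero : Nat.card {i // (P i).eval z = 0} = Nat.card ι :=
    Nat.card_congr (Equiv.subtypeUnivEquiv fun i => congrFun hz i)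
  by_contra hz0
  exact hm.not_ge (hzero ▸ h.card_zeros_le hP (by simpa using hz0) z.2)

end AffinePoint

/-! ### Codes from totally split covers -/

section SplitCover

variable {F : Type*} [Field F] {a b a' b' : F[X]} {d d' e r : ℕ} {κ : Type*}

/-- A map from the curve `y² = a(x) + b(x) y` to the curve `y² = a'(x) + b'(x) y`, given on points
by `P ↦ (u(P) / q(P), v(P) / q(P) ^ d')`, together with rational points `base k` downstairs over
each of which it has `r + 1` rational points, separated by `x`. The integer `e` bounds the order of
the poles of `u` and `q` at infinity; for the isogeny it is the degree. -/
structure SplitCover (a b : F[X]) (d : ℕ) (a' b' : F[X]) (d' e r : ℕ) (κ : Type*) where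
  u : QuadraticAlgebra F[X] a b
  v : QuadraticAlgebra F[X] a b
  q : QuadraticAlgebra F[X] a b
  base : κ → AffinePoint a' b'
  fiber : κ → Fin (r + 1) → AffinePoint a b
  u_mem : u ∈ poleSpace a b d e
  v_mem : v ∈ poleSpace a b d (e * d')
  q_mem : q ∈ poleSpace a b d e
  base_injective : Function.Injective base
  fiber_x_injective : ∀ k, Function.Injective fun l => (fiber k l).x
  eval_q_ne_zero : ∀ k l, (fiber k l).eval q ≠ 0
  eval_u : ∀ k l, (fiber k l).eval u = (fiber k l).eval q * (base k).x
  eval_v : ∀ k l, (fiber k l).eval v = (fiber k l).eval q ^ d' * (base k).y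

namespace SplitCover

variable (φ : SplitCover a b d a' b' d' e r κ)

lemma fiber_injective : Function.Injective fun p : κ × Fin (r + 1) => φ.fiber p.1 p.2 := by
  rintro ⟨k, l⟩ ⟨k', l'⟩ (hP : φ.fiber k l = φ.fiber k' l')
  have hq := φ.eval_q_ne_zero k l
  have hx : (φ.base k).x = (φ.base k').x :=
    mul_left_cancel₀ hq (by rw [← φ.eval_u, hP, φ.eval_u])
  have hy : (φ.base k).y = (φ.base k').y :=
    mul_left_cancel₀ (pow_ne_zero d' hq) (by rw [← φ.eval_v, hP, φ.eval_v])
  obtain rfl := φ.base_injective (AffinePoint.ext hx hy)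
  exact congrArg (k, ·) (φ.fiber_x_injective k (congrArg AffinePoint.x hP))

section Pullback

variable (h : IsInertAtInfty a b d)
include h

-- Homogenising `p` clears the denominators of `p(u / q)`.
lemma exists_pullback_polynomial {n : ℕ} {p : F[X]} (hp : p.degree ≤ n) :
    ∃ z ∈ poleSpace a b d (e * n), ∀ k l,
      (φ.fiber k l).eval z = (φ.fiber k l).eval φ.q ^ n * p.eval (φ.base k).x := by
  refine ⟨∑ i ∈ Finset.range (n + 1), p.coeff i • (φ.u ^ i * φ.q ^ (n - i)),
    Submodule.sum_mem _ fun i hi => Submodule.smul_mem _ _ ?_, fun k l => ?_⟩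
  · have hin : i ≤ n := Finset.mem_range_succ_iff.1 hi
    have := h.mul_mem_poleSpace (h.pow_mem_poleSpace φ.u_mem i)
      (h.pow_mem_poleSpace φ.q_mem (n - i))
    rwa [← mul_add, Nat.add_sub_cancel' hin] at this
  · rw [eval_eq_sum_range' (Nat.lt_succ_of_le (natDegree_le_of_degree_le hp)), map_sum,
      Finset.mul_sum]
    refine Finset.sum_congr rfl fun i hi => ?_
    rw [map_smul, map_mul, map_pow, map_pow, φ.eval_u, mul_pow, smul_eq_mul,
      ← pow_mul_pow_sub _ (Finset.mem_range_succ_iff.1 hi)]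
    ring

lemma exists_pullback {n : ℕ} {f : QuadraticAlgebra F[X] a' b'} (hf : f ∈ poleSpace a' b' d' n) :
    ∃ z ∈ poleSpace a b d (e * n), ∀ k l,
      (φ.fiber k l).eval z = (φ.fiber k l).eval φ.q ^ n * (φ.base k).eval f := by
  obtain ⟨hre, him⟩ := mem_poleSpace.1 hf
  obtain ⟨z, hz, hz_eval⟩ := φ.exists_pullback_polynomial h hre
  by_cases him0 : f.im = 0
  · exact ⟨z, hz, fun k l => by simp [hz_eval, AffinePoint.eval_apply, him0]⟩
  rw [degree_eq_natDegree him0] at him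
  norm_cast at him
  obtain ⟨j, rfl⟩ := Nat.exists_eq_add_of_le' (le_of_add_le_right him)
  obtain ⟨w, hw, hw_eval⟩ := φ.exists_pullback_polynomial h
    (degree_le_of_natDegree_le (le_of_add_le_add_right him))
  refine ⟨z + w * φ.v, add_mem hz (mul_add e j d' ▸ h.mul_mem_poleSpace hw φ.v_mem),
    fun k l => ?_⟩
  rw [map_add, map_mul, hz_eval, hw_eval, φ.eval_v, AffinePoint.eval_apply (φ.base k)]
  ring

end Pullback

/-- The code of the words `∑ fᵢ xⁱ` with `i < r`, where `fᵢ` is pulled back from the base curve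
and has poles of order at most `n` there. -/
noncomputable def code (n : ℕ) : Submodule F (κ × Fin (r + 1) → F) :=
  LinearMap.range (fiberwiseEval (fun k l => (φ.fiber k l).x) (evalCode φ.base d' n))

lemma exists_lift_of_mem_code (h : IsInertAtInfty a b d) {n : ℕ} {w : κ × Fin (r + 1) → F}
    (hw : w ∈ φ.code n) :
    ∃ z ∈ poleSpace a b d (e * n + (r - 1)), ∀ p,
      (φ.fiber p.1 p.2).eval z = (φ.fiber p.1 p.2).eval φ.q ^ n * w p := by
  obtain ⟨f, rfl⟩ := hw
  have hpull (i : Fin r) : ∃ z ∈ poleSpace a b d (e * n), ∀ k l, (φ.fiber k l).eval z =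
      (φ.fiber k l).eval φ.q ^ n * (f i : κ → F) k := by
    obtain ⟨g, hgf⟩ := (f i).2
    obtain ⟨z, hz, hz_eval⟩ := φ.exists_pullback h g.2
    exact ⟨z, hz, fun k l => by rw [hz_eval, ← hgf]; rfl⟩
  choose z hz hz_eval using hpull
  refine ⟨∑ i, z i * algebraMap F[X] _ (X ^ (i : ℕ)), Submodule.sum_mem _ fun i _ => ?_,
    fun ⟨k, l⟩ => ?_⟩
  · have hXi : (X ^ (i : ℕ) : F[X]).degree ≤ (r - 1 : ℕ) :=
      (degree_X_pow_le _).trans (by exact_mod_cast Nat.le_sub_one_of_lt i.2)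
    exact h.mul_mem_poleSpace (hz i) (algebraMap_mem_poleSpace hXi)
  · rw [map_sum, fiberwiseEval_apply, Finset.mul_sum]
    refine Finset.sum_congr rfl fun i _ => ?_
    rw [map_mul, hz_eval, AffinePoint.eval_algebraMap, eval_pow, eval_X, mul_assoc]

theorem isLRC_code [Finite κ] (h : IsInertAtInfty a b d) (h' : IsInertAtInfty a' b' d') {n : ℕ}
    (hd' : d' ≤ n + 1) (hn : 2 * n < Nat.card κ) :
    IsLRC (φ.code n) (r * (2 * n + 2 - d')) (Nat.card κ * (r + 1) - 2 * (e * n + (r - 1))) r where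
  finrank_eq := by
    rw [code, finrank_range_fiberwiseEval φ.fiber_x_injective,
      finrank_evalCode h' φ.base_injective hd' hn]
  le_card_support w hw hw0 := by
    obtain ⟨z, hz, hz_eval⟩ := φ.exists_lift_of_mem_code h hw
    have hne (p) : (φ.fiber p.1 p.2).eval z ≠ 0 ↔ w p ≠ 0 := by
      rw [hz_eval, mul_ne_zero_iff, and_iff_right (pow_ne_zero n (φ.eval_q_ne_zero p.1 p.2))]
    obtain ⟨p, hp⟩ := Function.ne_iff.1 hw0
    have hz0 : z ≠ 0 := by
      rintro rfl
      exact (hne p).2 hp (map_zero _)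
    simpa [hne] using h.le_card_eval_ne_zero φ.fiber_injective hz0 hz
  locality := locality_range_fiberwiseEval φ.fiber_x_injective

end SplitCover

end SplitCover

/-! ### The field with 32 elements and a 3-isogeny over it -/

/-- A computable model of the field with `32` elements, on which finite statements can be decided:
`⟨c0, c1, c2, c3, c4⟩` is the class of `c0 + c1 z + c2 z² + c3 z³ + c4 z⁴` in
`𝔽₂[z] / (z⁵ + z² + 1)`. -/
@[ext] structure F32 where
  c0 : ZMod 2
  c1 : ZMod 2
  c2 : ZMod 2
  c3 : ZMod 2
  c4 : ZMod 2
deriving DecidableEq, Fintype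

namespace F32

/-- Multiplication in `F32`. The entry `dᵢ` is the coefficient of `zⁱ` in the product of
polynomials, reduced by `z⁵ = 1 + z²`, `z⁶ = z + z³`, `z⁷ = z² + z⁴`, `z⁸ = 1 + z² + z³`. -/
protected def mul (a b : F32) : F32 :=
  let d5 := a.c1 * b.c4 + a.c2 * b.c3 + a.c3 * b.c2 + a.c4 * b.c1
  let d6 := a.c2 * b.c4 + a.c3 * b.c3 + a.c4 * b.c2
  let d7 := a.c3 * b.c4 + a.c4 * b.c3
  let d8 := a.c4 * b.c4
  { c0 := a.c0 * b.c0 + d5 + d8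
    c1 := a.c0 * b.c1 + a.c1 * b.c0 + d6
    c2 := a.c0 * b.c2 + a.c1 * b.c1 + a.c2 * b.c0 + d5 + d7 + d8
    c3 := a.c0 * b.c3 + a.c1 * b.c2 + a.c2 * b.c1 + a.c3 * b.c0 + d6 + d8
    c4 := a.c0 * b.c4 + a.c1 * b.c3 + a.c2 * b.c2 + a.c3 * b.c1 + a.c4 * b.c0 + d7 }

instance : Zero F32 := ⟨⟨0, 0, 0, 0, 0⟩⟩
instance : One F32 := ⟨⟨1, 0, 0, 0, 0⟩⟩
instance : Add F32 :=
  ⟨fun a b => ⟨a.c0 + b.c0, a.c1 + b.c1, a.c2 + b.c2, a.c3 + b.c3, a.c4 + b.c4⟩⟩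
instance : Neg F32 := ⟨fun a => ⟨-a.c0, -a.c1, -a.c2, -a.c3, -a.c4⟩⟩
instance : Mul F32 := ⟨F32.mul⟩

lemma zero_def : (0 : F32) = ⟨0, 0, 0, 0, 0⟩ := rfl

lemma one_def : (1 : F32) = ⟨1, 0, 0, 0, 0⟩ := rfl

lemma add_def (a b : F32) :
    a + b = ⟨a.c0 + b.c0, a.c1 + b.c1, a.c2 + b.c2, a.c3 + b.c3, a.c4 + b.c4⟩ := rfl

lemma mul_def (a b : F32) : a * b = F32.mul a b := rfl

instance : CommRing F32 where
  add_assoc a b c := by ext <;> exact add_assoc ..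
  zero_add a := by ext <;> exact zero_add _
  add_zero a := by ext <;> exact add_zero _
  add_comm a b := by ext <;> exact add_comm ..
  neg_add_cancel a := by ext <;> exact neg_add_cancel _
  mul_assoc a b c := by simp only [mul_def, F32.mul]; congr 1 <;> ring
  one_mul a := by simp [mul_def, one_def, F32.mul]
  mul_one a := by simp [mul_def, one_def, F32.mul]
  zero_mul a := by simp [mul_def, zero_def, F32.mul]
  mul_zero a := by simp [mul_def, zero_def, F32.mul]
  left_distrib a b c := by simp only [mul_def, add_def, F32.mul]; congr 1 <;> ring
  right_distrib a b c := by simp only [mul_def, add_def, F32.mul]; congr 1 <;> ring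
  mul_comm a b := by simp only [mul_def, F32.mul]; congr 1 <;> ring
  nsmul := nsmulRec
  zsmul := zsmulRec

instance : Nontrivial F32 := ⟨0, 1, by decide⟩

set_option maxRecDepth 10000 in
instance : NoZeroDivisors F32 where
  eq_zero_or_eq_zero_of_mul_eq_zero {a b} := by revert a b; decide +kernel

instance : IsDomain F32 := NoZeroDivisors.to_isDomain F32

noncomputable instance : Field F32 := Fintype.fieldOfDomain F32

lemma natCard : Nat.card F32 = 32 := by
  rw [Nat.card_eq_fintype_card]; rfl

/-- The element of `F32` whose coordinates are the binary digits of `n`, lowest digit first. -/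
def ofBits (n : ℕ) : F32 := ⟨n, (n / 2 : ℕ), (n / 4 : ℕ), (n / 8 : ℕ), (n / 16 : ℕ)⟩

/-- The two elliptic curves have the quartic models `y² = a(x) + (x² + x + 1) y`, and `a` is
`quartic 20 0 0` for the domain of the isogeny and `quartic 20 31 24` for its codomain. The
coefficients are encoded by `ofBits`. -/
noncomputable def quartic (c₃ c₂ c₀ : ℕ) : F32[X] :=
  X ^ 4 + C (ofBits c₃) * X ^ 3 + C (ofBits c₂) * X ^ 2 + C (ofBits c₀)

lemma eval_quartic (c₃ c₂ c₀ : ℕ) (x : F32) :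
    (quartic c₃ c₂ c₀).eval x =
      x ^ 4 + ofBits c₃ * x ^ 3 + ofBits c₂ * x ^ 2 + ofBits c₀ := by
  simp only [quartic, eval_add, eval_mul, eval_pow, eval_X, eval_C]

-- There is no primitive cube root of unity, as `3` does not divide `31`.
lemma sq_ne_one_add : ∀ s : F32, s ^ 2 ≠ 1 + 1 * s := by decide +kernel

lemma isInertAtInfty_quartic (c₃ c₂ c₀ : ℕ) :
    IsInertAtInfty (quartic c₃ c₂ c₀) (X ^ 2 + X + 1) 2 where
  natDegree_left_le := by rw [quartic]; compute_degree
  natDegree_right_le := by compute_degree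
  sq_ne := by simpa [quartic, coeff_X, coeff_one, coeff_C] using sq_ne_one_add

/-- The `x`-coordinates of the points in seven of the fourteen fibres. The other seven fibres
consist of the conjugate points, which have the same `x`-coordinates. -/
def fiberX (j : Fin 7) (l : Fin 3) : F32 :=
  ofBits (![![0, 26, 27], ![13, 31, 29], ![7, 4, 24], ![25, 12, 18], ![10, 16, 20],
    ![3, 22, 28], ![14, 30, 21]] j l)

/-- The `y`-coordinates of the points with `x`-coordinates `fiberX j l`. -/
def fiberY (j : Fin 7) (l : Fin 3) : F32 :=
  ofBits (![![0, 17, 22], ![8, 15, 29], ![27, 7, 5], ![5, 4, 27], ![13, 1, 0],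
    ![30, 15, 25], ![6, 21, 25]] j l)

/-- The `x`-coordinates of the images of the fibres `fiberX j` under the isogeny. -/
def baseX (j : Fin 7) : F32 := ofBits (![1, 15, 27, 7, 14, 9, 5] j)

/-- The `y`-coordinates of the images of the fibres `fiberX j` under the isogeny. -/
def baseY (j : Fin 7) : F32 := ofBits (![7, 26, 25, 26, 12, 8, 10] j)

/-- For `s = true`, the `y`-coordinate of the point conjugate to `(x, y)` on a curve
`y² = a(x) + (x² + x + 1) y`; conjugation exchanges the two points with the same `x`. -/
noncomputable def conjugate (s : Bool) (x y : F32) : F32 := bif s then y + (x ^ 2 + x + 1) else y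

/-- The fourteen points of the codomain over which the isogeny splits completely, in seven
conjugate pairs. -/
noncomputable def basePoint (k : Fin 7 × Bool) :
    AffinePoint (quartic 20 31 24) (X ^ 2 + X + 1) where
  x := baseX k.1
  y := conjugate k.2 (baseX k.1) (baseY k.1)
  equation := by
    simp only [eval_quartic, eval_add, eval_pow, eval_X, eval_one]
    revert k
    decide +kernel

/-- The fibre over `basePoint k`. The fourteen fibres contain `42` points, which are all the
rational points of the domain. -/
noncomputable def fiberPoint (k : Fin 7 × Bool) (l : Fin 3) :
    AffinePoint (quartic 20 0 0) (X ^ 2 + X + 1) where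
  x := fiberX k.1 l
  y := conjugate k.2 (fiberX k.1 l) (fiberY k.1 l)
  equation := by
    simp only [eval_quartic, eval_add, eval_pow, eval_X, eval_one]
    revert k l
    decide +kernel

lemma basePoint_injective : Function.Injective basePoint := fun k k' h => by
  have hxy : ∀ k k', (basePoint k).x = (basePoint k').x → (basePoint k).y = (basePoint k').y →
      k = k' := by
    decide +kernel
  exact hxy k k' (congrArg AffinePoint.x h) (congrArg AffinePoint.y h)

/-- The 3-isogeny in terms of the quartic models, with its fourteen totally split fibres. -/
noncomputable def cover : SplitCover (quartic 20 0 0) (X ^ 2 + X + 1) 2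
    (quartic 20 31 24) (X ^ 2 + X + 1) 2 3 2 (Fin 7 × Bool) where
  u := ⟨X ^ 3 + C (ofBits 25), 0⟩
  v := ⟨C (ofBits 29) * X ^ 4 + C (ofBits 31) * X ^ 3 + C (ofBits 13) * X ^ 2 +
      C (ofBits 5) * X + C (ofBits 18), X ^ 4 + C (ofBits 25) * X ^ 2 + C (ofBits 6)⟩
  q := ⟨X ^ 2 + C (ofBits 25) * X + C (ofBits 25), 0⟩
  base := basePoint
  fiber := fiberPoint
  u_mem := mem_poleSpace_of_natDegree_le (by compute_degree) natDegree_zero.le (by decide)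
  v_mem := mem_poleSpace_of_natDegree_le (n := 4) (by compute_degree!) (by compute_degree)
    (by decide)
  q_mem := mem_poleSpace_of_natDegree_le (by compute_degree!) natDegree_zero.le (by decide)
  base_injective := basePoint_injective
  fiber_x_injective k := (by decide +kernel : ∀ j, Function.Injective (fiberX j)) k.1
  eval_q_ne_zero := by
    simp only [AffinePoint.eval_apply, eval_add, eval_mul, eval_pow, eval_X, eval_C, eval_zero]
    decide +kernel
  eval_u := by
    simp only [AffinePoint.eval_apply, eval_add, eval_mul, eval_pow, eval_X, eval_C, eval_zero]
    decide +kernel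
  eval_v := by
    simp only [AffinePoint.eval_apply, eval_add, eval_mul, eval_pow, eval_X, eval_C, eval_zero]
    decide +kernel

end F32

theorem exists_LRC_F32_length42_general {F : Type*} [Field F] (hF : Nat.card F = 32) {t : ℕ}
    (ht : Even t) (ht2 : 2 ≤ t) (ht12 : t ≤ 12) :
    ∃ C : Submodule F (Fin 42 → F), IsLRC C (2 * t) (40 - 3 * t) 2 := by
  obtain ⟨n, rfl⟩ := ht
  have card_base : Nat.card (Fin 7 × Bool) = 14 := by simp
  have hcode := F32.cover.isLRC_code (F32.isInertAtInfty_quartic 20 0 0)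
    (F32.isInertAtInfty_quartic 20 31 24) (n := n) (by omega) (by omega)
  have : Finite F := Nat.finite_of_card_ne_zero (by omega)
  have := Fintype.ofFinite F
  let e : F32 ≃+* F := FiniteField.ringEquivOfCardEq <| by
    rw [← Nat.card_eq_fintype_card, ← Nat.card_eq_fintype_card, F32.natCard, hF]
  let σ : (Fin 7 × Bool) × Fin 3 ≃ Fin 42 := Fintype.equivFinOfCardEq (by simp)
  convert hcode.exists_of_equiv e σ using 3 <;> omega

theorem exists_LRC_F32_length42 :
    ∀ t : ℕ, Even t → 2 ≤ t → t ≤ 12 →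
      ∃ C : Submodule (GaloisField 2 5) (Fin 42 → GaloisField 2 5),
        Module.finrank (GaloisField 2 5) C = 2 * t ∧
        (∀ x : Fin 42 → GaloisField 2 5, x ∈ C → x ≠ 0 →
          40 - 3 * t ≤ Nat.card {i : Fin 42 // x i ≠ 0}) ∧
        (∀ i : Fin 42, ∃ I : Finset (Fin 42), i ∉ I ∧ I.card ≤ 2 ∧
          ∀ x ∈ C, ∀ y ∈ C, (∀ j ∈ I, x j = y j) → x i = y i) := by
  intro t ht ht2 ht12
  obtain ⟨C, hC⟩ :=
    exists_LRC_F32_length42_general (GaloisField.card 2 5 (by norm_num)) ht ht2 ht12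
  exact ⟨C, hC.finrank_eq, hC.le_card_support, hC.locality⟩
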